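/- The function x ↦ g₂(x)/g₁(x) is strictly increasing on ℝ (note g₁(x) > 0 for all x ∈ ℝ, so the quotient is well defined). -/

import Mathlib

open MeasureTheory

/-- The standard normal density. -/
noncomputable def normPDF (x : ℝ) : ℝ := Real.exp (-x ^ 2 / 2) / Real.sqrt (2 * Real.pi)

/-- The standard normal cumulative distribution function. -/
noncomputable def normCDF (x : ℝ) : ℝ := ∫ t in Set.Iic x, normPDF t

/-- `g₁(x) = x·Φ(x) + φ(x)`, equal to `E[(Z+x)₊]` for standard normal `Z`. -/
noncomputable def g1 (x : ℝ) : ℝ := x * normCDF x + normPDF x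

/-- `g₂(x) = (x²+1)·Φ(x) + x·φ(x)`, equal to `E[(Z+x)₊²]` for standard normal `Z`. -/
noncomputable def g2 (x : ℝ) : ℝ := (x ^ 2 + 1) * normCDF x + x * normPDF x

/-- The inverse of `g₁` (on its range `(0,∞)`). -/
noncomputable def g1inv : ℝ → ℝ := Function.invFun g1

/-- `g = g₂ ∘ g₁⁻¹`. -/
noncomputable def gfn (t : ℝ) : ℝ := g2 (g1inv t)

open Filter Topology

lemma aux_pos {f f' : ℝ → ℝ} (h : ∀ x, HasDerivAt f (f' x) x) (hp : ∀ x, 0 < f' x)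
    (hl : Tendsto f atBot (𝓝 0)) (x : ℝ) : 0 < f x := by
  have hm : StrictMono f := strictMono_of_deriv_pos (fun y => by rw [(h y).deriv]; exact hp y)
  have h1 : 0 ≤ f (x - 1) := hm.monotone.le_of_tendsto hl _
  have h2 : f (x - 1) < f x := hm (by linarith)
  linarith

lemma pdf_pos (x : ℝ) : 0 < normPDF x := by
  unfold normPDF; positivity

lemma pdf_deriv (x : ℝ) : HasDerivAt normPDF (-x * normPDF x) x := by
  have h1 : HasDerivAt (fun y : ℝ => -y ^ 2 / 2) (-x) x := by
    have := ((hasDerivAt_pow 2 x).neg).div_const 2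
    refine HasDerivAt.congr_deriv this ?_
    simp
    ring
  have h2 := (h1.exp).div_const (Real.sqrt (2 * Real.pi))
  refine HasDerivAt.congr_deriv h2 ?_
  unfold normPDF
  ring

lemma pdf_cont : Continuous normPDF :=
  continuous_iff_continuousAt.2 fun x => (pdf_deriv x).continuousAt

lemma pdf_int : Integrable normPDF := by
  have h := (integrable_exp_neg_mul_sq (b := 1 / 2) (by norm_num)).div_const
    (Real.sqrt (2 * Real.pi))
  refine h.congr (Eventually.of_forall fun x => ?_)
  simp only [normPDF]
  congr 2
  ring

lemma cdf_deriv (x : ℝ) : HasDerivAt normCDF (normPDF x) x := by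
  have h1 : HasDerivAt (fun u => ∫ t in (0:ℝ)..u, normPDF t) (normPDF x) x :=
    (pdf_cont.integral_hasStrictDerivAt 0 x).hasDerivAt
  have h2 := h1.const_add (normCDF 0)
  refine h2.congr_of_eventuallyEq (Eventually.of_forall fun u => ?_)
  have := intervalIntegral.integral_Iic_sub_Iic (μ := volume) (f := normPDF) (a := 0) (b := u)
    pdf_int.integrableOn pdf_int.integrableOn
  simp only [normCDF]
  linarith

lemma pdf_le (x : ℝ) : normPDF x ≤ Real.exp (1 / 2) * Real.exp x := by
  have h1 : 1 ≤ Real.sqrt (2 * Real.pi) := by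
    rw [Real.one_le_sqrt]
    linarith [Real.pi_gt_three]
  unfold normPDF
  rw [← Real.exp_add]
  refine (div_le_self (Real.exp_pos _).le h1).trans (Real.exp_le_exp.2 ?_)
  nlinarith [sq_nonneg (x + 1)]

lemma cdf_nonneg (x : ℝ) : 0 ≤ normCDF x :=
  integral_nonneg fun t => (pdf_pos t).le

lemma cdf_le (x : ℝ) : normCDF x ≤ Real.exp (1 / 2) * Real.exp x := by
  have : ∫ t in Set.Iic x, Real.exp (1 / 2) * Real.exp t = Real.exp (1 / 2) * Real.exp x := by
    rw [integral_const_mul, integral_exp_Iic]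
  rw [← this]
  exact integral_mono pdf_int.integrableOn ((integrableOn_exp_Iic x).const_mul _) pdf_le

lemma lim_exp (n : ℕ) : Tendsto (fun x : ℝ => x ^ n * Real.exp x) atBot (𝓝 0) := by
  have h := ((Real.tendsto_pow_mul_exp_neg_atTop_nhds_zero n).comp
    tendsto_neg_atBot_atTop).const_mul ((-1 : ℝ) ^ n)
  rw [mul_zero] at h
  refine h.congr fun x => ?_
  simp only [Function.comp, neg_neg]
  rw [← mul_assoc, ← mul_pow]
  simp

lemma lim_aux {f : ℝ → ℝ} (h0 : ∀ x, 0 ≤ f x) (h : ∀ x, f x ≤ Real.exp (1 / 2) * Real.exp x)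
    (n : ℕ) : Tendsto (fun x : ℝ => x ^ n * f x) atBot (𝓝 0) := by
  have h1 := ((lim_exp n).abs).const_mul (Real.exp (1 / 2))
  rw [abs_zero, mul_zero] at h1
  refine squeeze_zero_norm (fun x => ?_) h1
  rw [Real.norm_eq_abs, abs_mul, abs_mul, abs_of_nonneg (h0 x), abs_of_pos (Real.exp_pos x)]
  calc |x ^ n| * f x ≤ |x ^ n| * (Real.exp (1 / 2) * Real.exp x) :=
        mul_le_mul_of_nonneg_left (h x) (abs_nonneg _)
    _ = _ := by ring

lemma lim_cdf (n : ℕ) : Tendsto (fun x : ℝ => x ^ n * normCDF x) atBot (𝓝 0) :=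
  lim_aux cdf_nonneg cdf_le n
lemma lim_pdf (n : ℕ) : Tendsto (fun x : ℝ => x ^ n * normPDF x) atBot (𝓝 0) :=
  lim_aux (fun x => (pdf_pos x).le) pdf_le n

lemma lim_cdf0 : Tendsto normCDF atBot (𝓝 0) := by simpa using lim_cdf 0

lemma lim_g1 : Tendsto g1 atBot (𝓝 0) := by
  have := (lim_cdf 1).add (lim_pdf 0)
  rw [add_zero] at this
  refine this.congr fun x => ?_
  simp only [g1]; ring

lemma lim_g2 : Tendsto g2 atBot (𝓝 0) := by
  have := ((lim_cdf 2).add (lim_cdf 0)).add (lim_pdf 1)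
  rw [add_zero, add_zero] at this
  refine this.congr fun x => ?_
  simp only [g2]; ring

lemma cdf_pos (x : ℝ) : 0 < normCDF x := aux_pos cdf_deriv pdf_pos lim_cdf0 x

lemma g1_deriv (x : ℝ) : HasDerivAt g1 (normCDF x) x := by
  have := ((hasDerivAt_id x).mul (cdf_deriv x)).add (pdf_deriv x)
  refine HasDerivAt.congr_deriv this ?_
  simp

lemma g1_pos (x : ℝ) : 0 < g1 x := aux_pos g1_deriv cdf_pos lim_g1 x

lemma g2_deriv (x : ℝ) : HasDerivAt g2 (2 * g1 x) x := by
  have := ((((hasDerivAt_pow 2 x).add_const 1)).mul (cdf_deriv x)).add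
    ((hasDerivAt_id x).mul (pdf_deriv x))
  refine HasDerivAt.congr_deriv this ?_
  simp [g1]
  ring

lemma g2_pos (x : ℝ) : 0 < g2 x :=
  aux_pos g2_deriv (fun x => mul_pos two_pos (g1_pos x)) lim_g2 x

lemma K_pos (x : ℝ) : 0 < 2 * (g1 x * normCDF x / normPDF x) - g2 x := by
  refine aux_pos (f := fun x => 2 * (g1 x * normCDF x / normPDF x) - g2 x)
    (f' := fun x => 2 * normCDF x * g2 x / normPDF x) (fun x => ?_) (fun x => ?_) ?_ x
  · have hne := (pdf_pos x).ne'
    have := ((((g1_deriv x).mul (cdf_deriv x)).div (pdf_deriv x) hne).const_mul 2).sub (g2_deriv x)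
    refine HasDerivAt.congr_deriv this ?_
    simp only [Pi.mul_apply]
    field_simp
    simp only [g1, g2]
    ring
  · have := cdf_pos x
    have := g2_pos x
    have := pdf_pos x
    positivity
  · have h : Tendsto (fun x => g1 x * normCDF x / normPDF x) atBot (𝓝 0) := by
      refine tendsto_of_tendsto_of_tendsto_of_le_of_le' tendsto_const_nhds lim_cdf0
        (Eventually.of_forall fun x => ?_) ?_
      · have := cdf_pos x
        have := g1_pos x
        have := pdf_pos x
        positivity
      · filter_upwards [eventually_le_atBot (0 : ℝ)] with x hx
        rw [div_le_iff₀ (pdf_pos x), mul_comm]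
        refine mul_le_mul_of_nonneg_left ?_ (cdf_pos x).le
        simp only [g1]
        nlinarith [cdf_pos x]
    simpa using (h.const_mul 2).sub lim_g2

lemma N_pos (x : ℝ) : 0 < 2 * g1 x ^ 2 - g2 x * normCDF x := by
  refine aux_pos (f := fun x => 2 * g1 x ^ 2 - g2 x * normCDF x)
    (f' := fun x => normPDF x * (2 * (g1 x * normCDF x / normPDF x) - g2 x))
    (fun x => ?_) (fun x => mul_pos (pdf_pos x) (K_pos x)) ?_ x
  · have hne := (pdf_pos x).ne'
    have := (((g1_deriv x).pow 2).const_mul 2).sub ((g2_deriv x).mul (cdf_deriv x))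
    refine HasDerivAt.congr_deriv this ?_
    field_simp
    simp
    ring
  · simpa using ((lim_g1.pow 2).const_mul 2).sub (lim_g2.mul lim_cdf0)

/-- `g₁ > 0` everywhere and `x ↦ g₂(x)/g₁(x)` is strictly
increasing on `ℝ`. -/
theorem stmt_9 :
    (∀ x : ℝ, 0 < g1 x) ∧ StrictMono fun x => g2 x / g1 x := by
  refine ⟨g1_pos, strictMono_of_deriv_pos fun x => ?_⟩
  have h := (g2_deriv x).div (g1_deriv x) (g1_pos x).ne'
  have h' : deriv (fun x => g2 x / g1 x) x = _ := h.deriv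
  rw [h']
  refine div_pos ?_ (pow_pos (g1_pos x) 2)
  linarith [N_pos x]
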